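/- Let f ∈ K̄[x] be a nonzero polynomial, R its multiset of roots in K̄, 𝔰 ⊆ R a sub-multiset of even cardinality, and α ∈ K̄. Set d₊(𝔰,α) := min_{a ∈ 𝔰} v(a − α) and d₋(𝔰,α) := max_{a ∈ R∖𝔰} v(a − α) (with the conventions min ∅ = +∞ and max ∅ = −∞), and assume d₋(𝔰,α) < d₊(𝔰,α). Then for every rational b with d₋(𝔰,α) ≤ b ≤ d₊(𝔰,α) one has 𝔱^R(α,b) = min{𝔱^{𝔰}(α,b), 𝔱^{R∖𝔰}(α,b)}. -/

import Mathlib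

open Polynomial

/-- The *Gauss valuation* of a polynomial: the minimum of the valuations of its
coefficients (with value `⊤ = +∞` for the zero polynomial). -/
noncomputable def gaussVal {Kbar : Type*} [Field Kbar]
    (v : AddValuation Kbar (WithTop ℚ)) (h : Kbar[X]) : WithTop ℚ :=
  h.support.inf fun i => v (h.coeff i)

/-- `h = q² + ρ` is a *part-square decomposition* of `h`:
`deg q ≤ ⌈deg h / 2⌉`, encoded as `2 * deg q ≤ deg h + 1` (`q = 0` is allowed). -/
def IsPSD {Kbar : Type*} [Field Kbar] (h q ρ : Kbar[X]) : Prop :=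
  h = q ^ 2 + ρ ∧ 2 * q.natDegree ≤ h.natDegree + 1

/-- A part-square decomposition `h = q² + ρ` is *good* if either `v ρ − v h ≥ 2 v 2`,
or `v ρ − v h < 2 v 2` and no part-square decomposition of `h` has strictly larger
Gauss valuation of its remainder. -/
def IsGoodPSD {Kbar : Type*} [Field Kbar] (v : AddValuation Kbar (WithTop ℚ))
    (h q ρ : Kbar[X]) : Prop :=
  IsPSD h q ρ ∧
    (gaussVal v h + (v 2 + v 2) ≤ gaussVal v ρ ∨
      (gaussVal v ρ < gaussVal v h + (v 2 + v 2) ∧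
        ∀ q' ρ' : Kbar[X], IsPSD h q' ρ' → gaussVal v ρ' ≤ gaussVal v ρ))

/-- The residue field of `v` is algebraically closed, encoded via integral lifts:
every monic polynomial of positive degree with integral coefficients has an integral
root modulo the maximal ideal. -/
def ResidueAlgClosed {Kbar : Type*} [Field Kbar]
    (v : AddValuation Kbar (WithTop ℚ)) : Prop :=
  ∀ p : Kbar[X], p.Monic → 0 < p.natDegree → (∀ i, 0 ≤ v (p.coeff i)) →
    ∃ x : Kbar, 0 ≤ v x ∧ 0 < v (p.eval x)

/-- The monic polynomial `h_S := ∏_{a ∈ S} (z − a)` attached to a finite multiset `S`. -/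
noncomputable def rootsPoly {Kbar : Type*} [Field Kbar] (S : Multiset Kbar) : Kbar[X] :=
  (S.map fun a => X - C a).prod

/-- `TVal v S α b t` expresses that `𝔱^S(α, b) = t`, i.e. (for some, equivalently any,
`β ∈ K̄ˣ` with `v β = b`) that
`t = min (2v(2), sup { v ρ − v (h_S(βz+α)) : h_S(βz+α) = q² + ρ part-square dec. })`;
the subtraction is avoided by adding `v (h_S(βz+α))` throughout and the truncated
supremum is expressed via `IsLUB`. -/
def TVal {Kbar : Type*} [Field Kbar] (v : AddValuation Kbar (WithTop ℚ))
    (S : Multiset Kbar) (α : Kbar) (b t : ℚ) : Prop :=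
  ∃ β : Kbar, β ≠ 0 ∧ v β = (b : WithTop ℚ) ∧
    IsLUB {u : WithTop ℚ |
        ∃ q ρ : Kbar[X], IsPSD ((rootsPoly S).comp (C β * X + C α)) q ρ ∧
          u = min (gaussVal v ((rootsPoly S).comp (C β * X + C α)) + (v 2 + v 2))
                (gaussVal v ρ)}
      (gaussVal v ((rootsPoly S).comp (C β * X + C α)) + (t : WithTop ℚ))

/-!
If `v(2) = 0`, then `h = 0² + h` is good for every `h` and all the numbers involved are `0`; let
`v(2) > 0`. Every polynomial over an algebraically closed field is of the form `a² + z b²`, and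
so every `h` has a part-square decomposition `h = q² + ρ` with `ρ` totally odd, i.e. with odd
powers of `z` only. The odd coefficients of a square are divisible by `2`, and therefore a
decomposition whose remainder attains its Gauss valuation at an odd index is good.

After the substitution `z ↦ βz + α` and rescaling, the factors `h₁` and `h₂` of `h_R` belonging
to `𝔰` and to `R ∖ 𝔰` become integral. If `b < d₊`, then `h₁` reduces to an even power of `z`,
while `h₂` has constant coefficient `1`; if `b = d₊ > d₋`, then `h₂` reduces to `1`. Either way
the reductions are coprime and one of them has no odd coefficients. For totally odd
decompositions `hᵢ = qᵢ² + ρᵢ`, the decomposition of `h₁h₂` with square part `(q₁q₂)²` has the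
remainder `h₁ρ₂ + h₂ρ₁ - ρ₁ρ₂`. If `min (v ρ₁) (v ρ₂) < 2v(2)`, then coprimality excludes
cancellation, so the remainder has this valuation, while its even coefficients have a larger one;
hence the decomposition is good. If the minimum is at least `2v(2)`, it is good trivially.
-/

section GaussValuation

variable {F : Type*} [Field F] (v : AddValuation F (WithTop ℚ))

theorem le_gaussVal_iff {c : WithTop ℚ} {p : F[X]} :
    c ≤ gaussVal v p ↔ ∀ i, c ≤ v (p.coeff i) := by
  rw [gaussVal, Finset.le_inf_iff]
  refine ⟨fun h i => ?_, fun h i _ => h i⟩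
  by_cases hi : i ∈ p.support
  · exact h i hi
  · rw [notMem_support_iff.mp hi, v.map_zero]
    exact le_top

theorem gaussVal_le_map_coeff (p : F[X]) (i : ℕ) : gaussVal v p ≤ v (p.coeff i) :=
  (le_gaussVal_iff v).mp le_rfl i

theorem lt_gaussVal_of_forall {c : WithTop ℚ} {p : F[X]} (hc : c < ⊤)
    (h : ∀ i, c < v (p.coeff i)) : c < gaussVal v p :=
  (Finset.lt_inf_iff hc).mpr fun i _ => h i

theorem gaussVal_zero : gaussVal v (0 : F[X]) = ⊤ := by
  rw [gaussVal, support_zero, Finset.inf_empty]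

theorem exists_map_coeff_eq_gaussVal (p : F[X]) : ∃ i, v (p.coeff i) = gaussVal v p := by
  obtain rfl | hp := eq_or_ne p 0
  · exact ⟨0, by rw [coeff_zero, v.map_zero, gaussVal_zero]⟩
  · obtain ⟨i, -, hi⟩ := Finset.exists_mem_eq_inf p.support (support_nonempty.mpr hp)
      fun i => v (p.coeff i)
    exact ⟨i, hi.symm⟩

theorem gaussVal_ne_top {p : F[X]} (hp : p ≠ 0) : gaussVal v p ≠ ⊤ :=
  ne_top_of_le_ne_top (v.ne_top_iff.mpr (leadingCoeff_ne_zero.mpr hp))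
    (gaussVal_le_map_coeff v p p.natDegree)

theorem gaussVal_C (c : F) : gaussVal v (C c) = v c := by
  apply le_antisymm
  · simpa only [coeff_C_zero] using gaussVal_le_map_coeff v (C c) 0
  · rw [le_gaussVal_iff]
    intro i
    rw [coeff_C]
    split_ifs
    · exact le_rfl
    · rw [v.map_zero]
      exact le_top

theorem gaussVal_eq_zero_of_coeff_eq_one {p : F[X]} (hp : 0 ≤ gaussVal v p) {i : ℕ}
    (hi : p.coeff i = 1) : gaussVal v p = 0 :=
  le_antisymm (by simpa only [hi, v.map_one] using gaussVal_le_map_coeff v p i) hp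

theorem min_gaussVal_le_add (p q : F[X]) :
    min (gaussVal v p) (gaussVal v q) ≤ gaussVal v (p + q) := by
  rw [le_gaussVal_iff]
  intro i
  rw [coeff_add]
  exact (min_le_min (gaussVal_le_map_coeff v p i) (gaussVal_le_map_coeff v q i)).trans
    (v.map_add _ _)

theorem add_gaussVal_le_mul (p q : F[X]) :
    gaussVal v p + gaussVal v q ≤ gaussVal v (p * q) := by
  rw [le_gaussVal_iff]
  intro n
  rw [coeff_mul]
  refine v.map_le_sum fun x _ => ?_
  rw [v.map_mul]
  exact add_le_add (gaussVal_le_map_coeff v p _) (gaussVal_le_map_coeff v q _)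

/-- `n` is the *residual degree* of `p`: the largest index at which the Gauss valuation is
attained, i.e. the degree of the reduction of `p` once `p` is scaled to Gauss valuation `0`.
The zero polynomial has no residual degree. -/
def IsResidualDegree (p : F[X]) (n : ℕ) : Prop :=
  v (p.coeff n) = gaussVal v p ∧ ∀ k, n < k → gaussVal v p < v (p.coeff k)

theorem exists_isResidualDegree {p : F[X]} (hp : p ≠ 0) : ∃ n, IsResidualDegree v p n := by
  classical
  let attained : ℕ → Prop := fun i => v (p.coeff i) = gaussVal v p
  have le_natDegree {j : ℕ} (hj : attained j) : j ≤ p.natDegree :=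
    le_natDegree_of_ne_zero <| v.ne_top_iff.mp <| hj.trans_ne (gaussVal_ne_top v hp)
  obtain ⟨i, hi⟩ := exists_map_coeff_eq_gaussVal v p
  refine ⟨Nat.findGreatest attained p.natDegree,
    Nat.findGreatest_spec (P := attained) (le_natDegree hi) hi, fun k hk => ?_⟩
  refine (gaussVal_le_map_coeff v p k).lt_of_ne fun h => hk.not_ge ?_
  exact Nat.le_findGreatest (le_natDegree h.symm) h.symm

variable {v}

theorem IsResidualDegree.ne_zero {p : F[X]} {n : ℕ} (hp : IsResidualDegree v p n) : p ≠ 0 := by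
  rintro rfl
  exact (hp.2 (n + 1) n.lt_succ_self).not_ge (by rw [gaussVal_zero]; exact le_top)

theorem isResidualDegree_natDegree_of_monic {p : F[X]} (hp : p.Monic) (hint : 0 ≤ gaussVal v p) :
    IsResidualDegree v p p.natDegree := by
  have h0 := gaussVal_eq_zero_of_coeff_eq_one v hint hp.coeff_natDegree
  refine ⟨by rw [hp.coeff_natDegree, v.map_one, h0], fun k hk => ?_⟩
  rw [coeff_eq_zero_of_natDegree_lt hk, v.map_zero, h0]
  exact WithTop.coe_lt_top 0

theorem IsResidualDegree.map_coeff_mul {p q : F[X]} {m n : ℕ} (hp : IsResidualDegree v p m)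
    (hq : IsResidualDegree v q n) :
    v ((p * q).coeff (m + n)) = gaussVal v p + gaussVal v q := by
  have hpt := gaussVal_ne_top v hp.ne_zero
  have hqt := gaussVal_ne_top v hq.ne_zero
  have hmain : v (p.coeff m * q.coeff n) = gaussVal v p + gaussVal v q := by
    rw [v.map_mul, hp.1, hq.1]
  have hmem : (m, n) ∈ Finset.HasAntidiagonal.antidiagonal (m + n) :=
    Finset.HasAntidiagonal.mem_antidiagonal.mpr rfl
  rw [coeff_mul, ← Finset.add_sum_erase _ _ hmem, ← hmain]
  refine v.map_add_eq_of_lt_left (v.map_lt_sum ?_ ?_)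
  · rw [hmain]
    exact WithTop.add_ne_top.mpr ⟨hpt, hqt⟩
  · rintro ⟨i, j⟩ hij
    obtain ⟨hne, hsum⟩ := Finset.mem_erase.mp hij
    rw [Finset.HasAntidiagonal.mem_antidiagonal] at hsum
    rw [hmain, v.map_mul]
    obtain hi | hj : m < i ∨ n < j := by
      by_contra! hle
      exact hne (Prod.ext (by omega) (by omega))
    · exact WithTop.add_lt_add_of_lt_of_le hqt (hp.2 i hi) (gaussVal_le_map_coeff v q j)
    · exact WithTop.add_lt_add_of_le_of_lt hpt (gaussVal_le_map_coeff v p i) (hq.2 j hj)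

variable (v)

theorem gaussVal_mul (p q : F[X]) : gaussVal v (p * q) = gaussVal v p + gaussVal v q := by
  obtain rfl | hp := eq_or_ne p 0
  · rw [zero_mul, gaussVal_zero, top_add]
  obtain rfl | hq := eq_or_ne q 0
  · rw [mul_zero, gaussVal_zero, add_top]
  obtain ⟨m, hm⟩ := exists_isResidualDegree v hp
  obtain ⟨n, hn⟩ := exists_isResidualDegree v hq
  refine le_antisymm ?_ (add_gaussVal_le_mul v p q)
  rw [← hm.map_coeff_mul hn]
  exact gaussVal_le_map_coeff v _ _

/-- The Gauss valuation as an additive valuation on the polynomial ring. -/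
noncomputable def gaussValuation : AddValuation F[X] (WithTop ℚ) :=
  AddValuation.of (gaussVal v) (gaussVal_zero v)
    (by rw [← C_1, gaussVal_C, v.map_one]) (min_gaussVal_le_add v) (gaussVal_mul v)

theorem gaussVal_eq_zero_of_monic {p : F[X]} (hp : p.Monic) (hint : 0 ≤ gaussVal v p) :
    gaussVal v p = 0 :=
  gaussVal_eq_zero_of_coeff_eq_one v hint hp.coeff_natDegree

theorem gaussVal_X : gaussVal v (X : F[X]) = 0 :=
  gaussVal_eq_zero_of_monic v monic_X <| (le_gaussVal_iff v).mpr fun i => by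
    rw [coeff_X]
    split_ifs <;> simp

theorem gaussVal_sq (p : F[X]) : gaussVal v (p ^ 2) = gaussVal v p + gaussVal v p := by
  rw [sq, gaussVal_mul]

theorem gaussVal_two : gaussVal v (2 : F[X]) = v 2 := by
  rw [← C_ofNat, gaussVal_C]

end GaussValuation

section ResiduallyCoprime

variable {F : Type*} [Field F] {v : AddValuation F (WithTop ℚ)}

theorem lt_add_of_ne_top_of_pos_of_le {x y c : WithTop ℚ} (hc : c ≠ ⊤) (hx : 0 < x)
    (hy : c ≤ y) : c < x + y := by
  simpa only [zero_add] using WithTop.add_lt_add_of_lt_of_le hc hx hy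

theorem gaussVal_monic_mul_add_le {p b c : F[X]} (hp : p.Monic) (hint : 0 ≤ gaussVal v p)
    (hdeg : c.degree < p.degree) : gaussVal v (p * b + c) ≤ gaussVal v c := by
  suffices hb : gaussVal v (p * b + c) ≤ gaussVal v b by
    have hpb : gaussVal v (p * b + c) ≤ gaussVal v (p * b) := by
      rwa [gaussVal_mul, gaussVal_eq_zero_of_monic v hp hint, zero_add]
    have hsub : gaussVal v (p * b + c) ≤ gaussVal v (p * b + c - p * b) :=
      (gaussValuation v).map_le_sub le_rfl hpb
    rwa [add_sub_cancel_left] at hsub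
  by_contra! hlt
  have hb0 : b ≠ 0 := by
    rintro rfl
    exact hlt.not_ge (by rw [gaussVal_zero]; exact le_top)
  obtain ⟨j, hj⟩ := exists_isResidualDegree v hb0
  have hcoeff : (p * b + c).coeff (p.natDegree + j) = (p * b).coeff (p.natDegree + j) := by
    rw [coeff_add, coeff_eq_zero_of_degree_lt (p := c), add_zero]
    exact hdeg.trans_le (degree_le_natDegree.trans (mod_cast Nat.le_add_right _ _))
  have hle := gaussVal_le_map_coeff v (p * b + c) (p.natDegree + j)
  rw [hcoeff, (isResidualDegree_natDegree_of_monic hp hint).map_coeff_mul hj,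
    gaussVal_eq_zero_of_monic v hp hint, zero_add] at hle
  exact hlt.not_ge hle

variable (v) in
/-- `p` and `q` are *residually coprime*: a Bézout relation with integral coefficients holds
modulo the maximal ideal. For integral `p` and `q` this says that their reductions are coprime. -/
def IsResiduallyCoprime (p q : F[X]) : Prop :=
  ∃ a b : F[X], 0 ≤ gaussVal v a ∧ 0 ≤ gaussVal v b ∧ 0 < gaussVal v (a * p + b * q - 1)

theorem IsResiduallyCoprime.gaussVal_mul_add_mul {p q b c : F[X]}
    (hpq : IsResiduallyCoprime v p q) (hp : p.Monic) (hp0 : 0 ≤ gaussVal v p)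
    (hq0 : 0 ≤ gaussVal v q) (hdeg : c.degree < p.degree) :
    gaussVal v (p * b + q * c) = min (gaussVal v b) (gaussVal v c) := by
  obtain ⟨s, t, -, ht, hst⟩ := hpq
  have hpb : gaussVal v (p * b) = gaussVal v b := by
    rw [gaussVal_mul, gaussVal_eq_zero_of_monic v hp hp0, zero_add]
  have hqc : gaussVal v c ≤ gaussVal v (q * c) := by
    rw [gaussVal_mul]
    exact le_add_of_nonneg_left hq0
  have hc : gaussVal v (p * b + q * c) ≤ gaussVal v c := by
    by_contra! hlt
    -- Multiplying by `t` turns `q * c` into `c` modulo `p` and the maximal ideal.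
    have hid : p * (t * b - s * c) + c =
        t * (p * b + q * c) - (s * p + t * q - 1) * c := by ring
    have hbig : gaussVal v c < gaussVal v (p * (t * b - s * c) + c) := by
      rw [hid]
      have hsub (f g : F[X]) : min (gaussVal v f) (gaussVal v g) ≤ gaussVal v (f - g) :=
        (gaussValuation v).map_sub f g
      refine (lt_min ?_ ?_).trans_le (hsub _ _)
      · rw [gaussVal_mul]
        exact hlt.trans_le (le_add_of_nonneg_left ht)
      · rw [gaussVal_mul]
        exact lt_add_of_ne_top_of_pos_of_le hlt.ne_top hst le_rfl
    exact hbig.not_ge (gaussVal_monic_mul_add_le hp hp0 hdeg)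
  have hb : gaussVal v (p * b + q * c) ≤ gaussVal v b := by
    have hsub : gaussVal v (p * b + q * c) ≤ gaussVal v (p * b + q * c - q * c) :=
      (gaussValuation v).map_le_sub le_rfl (hc.trans hqc)
    rwa [add_sub_cancel_right, hpb] at hsub
  refine le_antisymm (le_min hb hc) ((min_le_min hpb.ge hqc).trans ?_)
  exact min_gaussVal_le_add v _ _

theorem isResiduallyCoprime_of_sub_one_pos {p q : F[X]} (hq : 0 < gaussVal v (q - 1)) :
    IsResiduallyCoprime v p q := by
  refine ⟨0, 1, ?_, ?_, ?_⟩
  · rw [gaussVal_zero]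
    exact le_top
  · exact (gaussValuation v).map_one.ge
  · rwa [zero_mul, one_mul, zero_add]

theorem isResiduallyCoprime_of_sub_X_pow_pos {p q : F[X]} {n : ℕ}
    (hp : 0 < gaussVal v (p - X ^ n)) (hq : 0 ≤ gaussVal v q) (hq1 : q.coeff 0 = 1) :
    IsResiduallyCoprime v p q := by
  have hone : (0 : WithTop ℚ) ≤ gaussVal v (1 : F[X]) := (gaussValuation v).map_one.ge
  have hint : 0 ≤ gaussVal v (1 - q) := (gaussValuation v).map_le_sub hone hq
  have pow_nonneg {r : F[X]} (hr : 0 ≤ gaussVal v r) (k : ℕ) : 0 ≤ gaussVal v (r ^ k) :=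
    (nsmul_nonneg hr k).trans_eq ((gaussValuation v).map_pow r k).symm
  obtain ⟨w, hw⟩ : X ∣ 1 - q := X_dvd_iff.mpr (by rw [coeff_sub, coeff_one_zero, hq1, sub_self])
  have hw0 : 0 ≤ gaussVal v w := by
    rwa [hw, gaussVal_mul, gaussVal_X, zero_add] at hint
  -- `q` is inverted modulo `X ^ n` by the geometric series in `1 - q`.
  have hgeom : (∑ i ∈ Finset.range n, (1 - q) ^ i) * q = 1 - X ^ n * w ^ n := by
    rw [← mul_pow, ← hw, ← mul_neg_geom_sum, sub_sub_cancel, mul_comm]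
  refine ⟨w ^ n, ∑ i ∈ Finset.range n, (1 - q) ^ i, pow_nonneg hw0 n,
    (gaussValuation v).map_le_sum fun i _ => pow_nonneg hint i, ?_⟩
  rw [hgeom, show w ^ n * p + (1 - X ^ n * w ^ n) - 1 = (p - X ^ n) * w ^ n by ring, gaussVal_mul]
  exact add_pos_of_pos_of_nonneg hp (pow_nonneg hw0 n)

end ResiduallyCoprime

section OddAndEvenParts

variable {R F : Type*} [CommSemiring R] [Field F]

theorem coeff_expand_two_add_X_mul_two_mul (a b : R[X]) (k : ℕ) :
    (expand R 2 a + X * expand R 2 b).coeff (2 * k) = a.coeff k := by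
  have hodd : (X * expand R 2 b).coeff (2 * k) = 0 := by
    cases k with
    | zero => exact coeff_X_mul_zero _
    | succ k =>
      rw [show 2 * (k + 1) = (2 * k + 1) + 1 by ring, coeff_X_mul, coeff_expand two_pos,
        if_neg (by omega)]
  rw [coeff_add, coeff_expand_mul' two_pos, hodd, add_zero]

theorem coeff_expand_two_add_X_mul_two_mul_add_one (a b : R[X]) (k : ℕ) :
    (expand R 2 a + X * expand R 2 b).coeff (2 * k + 1) = b.coeff k := by
  rw [coeff_add, coeff_X_mul, coeff_expand_mul' two_pos, coeff_expand two_pos,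
    if_neg (by omega), zero_add]

theorem exists_eq_expand_two_add_X_mul (p : R[X]) :
    ∃ a b : R[X], p = expand R 2 a + X * expand R 2 b := by
  refine ⟨contract 2 p, contract 2 p.divX, ?_⟩
  ext n
  obtain ⟨k, rfl | rfl⟩ := n.even_or_odd'
  · rw [coeff_expand_two_add_X_mul_two_mul, coeff_contract two_ne_zero, mul_comm]
  · rw [coeff_expand_two_add_X_mul_two_mul_add_one, coeff_contract two_ne_zero, coeff_divX,
      mul_comm]

theorem sq_expand_two_add_X_mul (a b : R[X]) :
    (expand R 2 a + X * expand R 2 b) ^ 2 =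
      expand R 2 (a ^ 2 + X * b ^ 2) + X * expand R 2 (2 * (a * b)) := by
  simp only [map_add, map_mul, map_pow, expand_X, map_ofNat]
  ring

theorem add_gaussVal_le_map_coeff_sq_of_odd (v : AddValuation F (WithTop ℚ)) (q : F[X]) {i : ℕ}
    (hi : Odd i) : v 2 + gaussVal v (q ^ 2) ≤ v ((q ^ 2).coeff i) := by
  obtain ⟨k, rfl⟩ := hi
  obtain ⟨a, b, rfl⟩ := exists_eq_expand_two_add_X_mul q
  set q := expand F 2 a + X * expand F 2 b with hq
  have ha : gaussVal v q ≤ gaussVal v a := (le_gaussVal_iff v).mpr fun k => by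
    rw [← coeff_expand_two_add_X_mul_two_mul a b k]
    exact gaussVal_le_map_coeff v q _
  have hb : gaussVal v q ≤ gaussVal v b := (le_gaussVal_iff v).mpr fun k => by
    rw [← coeff_expand_two_add_X_mul_two_mul_add_one a b k]
    exact gaussVal_le_map_coeff v q _
  calc v 2 + gaussVal v (q ^ 2) ≤ v 2 + (gaussVal v a + gaussVal v b) := by
        rw [gaussVal_sq]
        gcongr
    _ = gaussVal v (2 * (a * b)) := by rw [gaussVal_mul, gaussVal_mul, gaussVal_two]
    _ ≤ v ((2 * (a * b)).coeff k) := gaussVal_le_map_coeff v _ k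
    _ = v ((q ^ 2).coeff (2 * k + 1)) := by
        rw [hq, sq_expand_two_add_X_mul, coeff_expand_two_add_X_mul_two_mul_add_one]

theorem natDegree_expand_two_add_X_mul_le [IsDomain R] (a b : R[X]) :
    (expand R 2 a + X * expand R 2 b).natDegree ≤ (a ^ 2 + X * b ^ 2).natDegree := by
  obtain rfl | hb := eq_or_ne b 0
  · simp [natDegree_expand, mul_comm]
  have hda : (a ^ 2).natDegree = 2 * a.natDegree := natDegree_pow a 2
  have hdb : (X * b ^ 2).natDegree = 2 * b.natDegree + 1 := by
    rw [natDegree_X_mul (pow_ne_zero 2 hb), natDegree_pow]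
  have hle : (expand R 2 a + X * expand R 2 b).natDegree ≤
      max (a ^ 2).natDegree (X * b ^ 2).natDegree := by
    refine (natDegree_add_le _ _).trans (max_le_max ?_ ?_)
    · rw [natDegree_expand, hda, mul_comm]
    · rw [natDegree_X_mul ((expand_ne_zero two_pos).mpr hb), natDegree_expand, hdb, mul_comm]
  obtain h | h : (a ^ 2).natDegree < (X * b ^ 2).natDegree ∨
      (X * b ^ 2).natDegree < (a ^ 2).natDegree := by omega
  · rwa [natDegree_add_eq_right_of_natDegree_lt h, ← max_eq_right h.le]
  · rwa [natDegree_add_eq_left_of_natDegree_lt h, ← max_eq_left h.le]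

-- Elements of this shape are norms from `F(√-X)` over `F(X)`, hence closed under products.
theorem exists_eq_sq_add_X_mul_sq [IsAlgClosed F] (g : F[X]) :
    ∃ a b : F[X], g = a ^ 2 + X * b ^ 2 := by
  have exists_C_eq_sq (c : F) : ∃ d : F, (C c : F[X]) = C d ^ 2 := by
    obtain ⟨d, rfl⟩ := IsAlgClosed.exists_pow_nat_eq c two_pos
    exact ⟨d, C_pow⟩
  induction IsAlgClosed.splits g using Submonoid.closure_induction with
  | mem f hf =>
    obtain ⟨c, rfl⟩ | ⟨c, rfl⟩ := hf <;> obtain ⟨d, hd⟩ := exists_C_eq_sq c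
    · exact ⟨C d, 0, by rw [hd]; ring⟩
    · exact ⟨C d, 1, by rw [hd]; ring⟩
  | one => exact ⟨1, 0, by ring⟩
  | mul f g _ _ hf hg =>
    obtain ⟨a, b, rfl⟩ := hf
    obtain ⟨c, d, rfl⟩ := hg
    exact ⟨a * c - X * (b * d), a * d + b * c, by ring⟩

/-- A *totally odd* polynomial: only odd powers of the variable occur. -/
def IsTotallyOdd (p : R[X]) : Prop :=
  ∀ i, Even i → p.coeff i = 0

theorem exists_isPSD_isTotallyOdd [IsAlgClosed F] (h : F[X]) :
    ∃ q ρ : F[X], IsPSD h q ρ ∧ IsTotallyOdd ρ := by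
  obtain ⟨e, o, rfl⟩ := exists_eq_expand_two_add_X_mul h
  obtain ⟨a, b, rfl⟩ := exists_eq_sq_add_X_mul_sq e
  set h := expand F 2 (a ^ 2 + X * b ^ 2) + X * expand F 2 o with hh
  set q := expand F 2 a + X * expand F 2 b with hq
  have hsq := sq_expand_two_add_X_mul a b
  rw [← hq] at hsq
  refine ⟨q, h - q ^ 2, ⟨(add_sub_cancel _ _).symm, ?_⟩, ?_⟩
  · have hqe : q.natDegree ≤ (a ^ 2 + X * b ^ 2).natDegree := natDegree_expand_two_add_X_mul_le a b
    have heh : 2 * (a ^ 2 + X * b ^ 2).natDegree ≤ h.natDegree := by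
      obtain h0 | h0 := eq_or_ne (a ^ 2 + X * b ^ 2) 0
      · rw [h0, natDegree_zero, mul_zero]
        exact Nat.zero_le _
      · apply le_natDegree_of_ne_zero
        rw [hh, coeff_expand_two_add_X_mul_two_mul]
        exact leadingCoeff_ne_zero.mpr h0
    omega
  · intro i hi
    obtain ⟨k, rfl⟩ := hi.two_dvd
    rw [coeff_sub, hsq, hh, coeff_expand_two_add_X_mul_two_mul,
      coeff_expand_two_add_X_mul_two_mul, sub_self]

end OddAndEvenParts

section GoodDecompositions

variable {F : Type*} [Field F] {v : AddValuation F (WithTop ℚ)}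

variable (v) in
/-- The Gauss valuation of `p` is attained at an odd index. This holds for `p = 0`. -/
def IsOddDominated (p : F[X]) : Prop :=
  ∃ i, Odd i ∧ v (p.coeff i) = gaussVal v p

theorem isOddDominated_of_forall_even {p : F[X]}
    (hp : ∀ i, Even i → gaussVal v p < v (p.coeff i)) : IsOddDominated v p := by
  obtain ⟨i, hi⟩ := exists_map_coeff_eq_gaussVal v p
  exact ⟨i, Nat.not_even_iff_odd.mp fun heven => (hp i heven).ne' hi, hi⟩

theorem IsTotallyOdd.isOddDominated {p : F[X]} (hp : IsTotallyOdd p) : IsOddDominated v p := by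
  obtain rfl | hp0 := eq_or_ne p 0
  · exact ⟨1, odd_one, by rw [coeff_zero, v.map_zero, gaussVal_zero]⟩
  · refine isOddDominated_of_forall_even fun i hi => ?_
    rw [hp i hi, v.map_zero]
    exact (gaussVal_ne_top v hp0).lt_top

theorem IsOddDominated.neg {p : F[X]} (hp : IsOddDominated v p) : IsOddDominated v (-p) := by
  obtain ⟨i, hi, hpi⟩ := hp
  exact ⟨i, hi, by rw [coeff_neg, v.map_neg, hpi]; exact ((gaussValuation v).map_neg p).symm⟩

theorem IsOddDominated.gaussVal_sq_add_le {p : F[X]} (hp : IsOddDominated v p) (h2 : 0 < v 2)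
    (s : F[X]) : gaussVal v (s ^ 2 + p) ≤ gaussVal v p := by
  by_contra! hlt
  have hs : gaussVal v p = gaussVal v (s ^ 2) := by
    have hsub : gaussVal v (s ^ 2 + p - p) = gaussVal v p :=
      (gaussValuation v).map_sub_eq_of_lt_right hlt
    rwa [add_sub_cancel_right, eq_comm] at hsub
  obtain ⟨i, hi, hpi⟩ := hp
  have hsi : v (p.coeff i) < v ((s ^ 2).coeff i) := by
    rw [hpi]
    exact (lt_add_of_ne_top_of_pos_of_le hlt.ne_top h2 hs.le).trans_le
      (add_gaussVal_le_map_coeff_sq_of_odd v s hi)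
  have hsum := gaussVal_le_map_coeff v (s ^ 2 + p) i
  rw [coeff_add, v.map_add_eq_of_lt_right hsi, hpi] at hsum
  exact hlt.not_ge hsum

theorem gaussVal_mul_add_lt {s c : F[X]}
    (hlt : gaussVal v (s * (s + c)) < gaussVal v c + gaussVal v c) :
    gaussVal v (s * (s + c)) < gaussVal v (c * s) := by
  rw [gaussVal_mul] at hlt
  have hsc : gaussVal v s < gaussVal v c := by
    by_contra! hle
    have hle' : gaussVal v c ≤ gaussVal v (s + c) := (gaussValuation v).map_le_add hle le_rfl
    exact hlt.not_ge (add_le_add hle hle')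
  have hadd : gaussVal v (s + c) = gaussVal v s := (gaussValuation v).map_add_eq_of_lt_left hsc
  rw [gaussVal_mul, gaussVal_mul, hadd]
  exact WithTop.add_lt_add_right hsc.ne_top hsc

theorem IsPSD.isGoodPSD_of_isOddDominated {h q ρ : F[X]} (hd : IsPSD h q ρ)
    (hρ : IsOddDominated v ρ) (h2 : 0 < v 2) : IsGoodPSD v h q ρ := by
  refine ⟨hd, (le_or_gt _ _).imp_right fun hlt => ⟨hlt, fun q' ρ' hd' => ?_⟩⟩
  by_contra! hlt'
  obtain ⟨s, rfl⟩ : ∃ s, q' = q + s := ⟨q' - q, (add_sub_cancel _ _).symm⟩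
  have hhρ : gaussVal v h ≤ gaussVal v ρ := hd.1 ▸ hρ.gaussVal_sq_add_le h2 q
  have hid : h - ρ = q ^ 2 := sub_eq_of_eq_add hd.1
  have hprod : gaussVal v (s * (s + 2 * q)) = gaussVal v ρ := by
    rw [show s * (s + 2 * q) = ρ - ρ' by linear_combination hd.1 - hd'.1]
    exact (gaussValuation v).map_sub_eq_of_lt_left hlt'
  have hρq : gaussVal v ρ < gaussVal v (2 * q) + gaussVal v (2 * q) := by
    refine hlt.trans_le ?_
    have hq : gaussVal v h ≤ gaussVal v (q ^ 2) :=
      hid ▸ (gaussValuation v).map_le_sub le_rfl hhρ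
    rw [gaussVal_mul, gaussVal_two, add_add_add_comm, ← gaussVal_sq, add_comm]
    gcongr
  have hcross : gaussVal v ρ < gaussVal v (2 * q * s) := by
    rw [← hprod] at hρq ⊢
    exact gaussVal_mul_add_lt hρq
  refine (hρ.neg.gaussVal_sq_add_le h2 s).not_gt ?_
  rw [show s ^ 2 + -ρ = -(ρ' + 2 * q * s) by linear_combination hd.1 - hd'.1]
  have hneg (p : F[X]) : gaussVal v (-p) = gaussVal v p := (gaussValuation v).map_neg p
  rw [hneg, hneg]
  exact (lt_min hlt' hcross).trans_le (min_gaussVal_le_add v _ _)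

theorem isGoodPSD_zero_self (h2 : v 2 = 0) (h : F[X]) : IsGoodPSD v h 0 h :=
  ⟨⟨by ring, by rw [natDegree_zero, mul_zero]; exact Nat.zero_le _⟩,
    Or.inl (by rw [h2, add_zero, add_zero])⟩

variable (v) in
/-- `PolyTVal v h t` says that `t` is the minimum of `2v(2)` and the supremum of `v(ρ) - v(h)`
over the part-square decompositions `h = q² + ρ`. As in `TVal`, the subtraction is avoided by
adding `v(h)` throughout. -/
def PolyTVal (h : F[X]) (t : ℚ) : Prop :=
  IsLUB {u : WithTop ℚ |
      ∃ q ρ : F[X], IsPSD h q ρ ∧ u = min (gaussVal v h + (v 2 + v 2)) (gaussVal v ρ)}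
    (gaussVal v h + (t : WithTop ℚ))

theorem IsGoodPSD.polyTVal_iff {h q ρ : F[X]} (hgood : IsGoodPSD v h q ρ) {t : ℚ} :
    PolyTVal v h t ↔
      gaussVal v h + (t : WithTop ℚ) = min (gaussVal v h + (v 2 + v 2)) (gaussVal v ρ) := by
  have hmax : IsGreatest {u : WithTop ℚ | ∃ q ρ : F[X],
      IsPSD h q ρ ∧ u = min (gaussVal v h + (v 2 + v 2)) (gaussVal v ρ)}
      (min (gaussVal v h + (v 2 + v 2)) (gaussVal v ρ)) := by
    refine ⟨⟨q, ρ, hgood.1, rfl⟩, ?_⟩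
    rintro _ ⟨q', ρ', hd, rfl⟩
    obtain hle | ⟨-, hopt⟩ := hgood.2
    · exact le_min (min_le_left _ _) ((min_le_left _ _).trans hle)
    · exact min_le_min_left _ (hopt q' ρ' hd)
  exact ⟨fun ht => ht.unique hmax.isLUB, fun ht => by rw [PolyTVal, ht]; exact hmax.isLUB⟩

theorem map_two_nonneg (v : AddValuation F (WithTop ℚ)) : 0 ≤ v 2 := by
  rw [← one_add_one_eq_two]
  exact v.map_le_add v.map_one.ge v.map_one.ge

theorem PolyTVal.unique {h : F[X]} (hh : h ≠ 0) {t t' : ℚ}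
    (ht : PolyTVal v h t) (ht' : PolyTVal v h t') : t = t' := by
  have heq := IsLUB.unique ht ht'
  rwa [WithTop.add_left_inj (gaussVal_ne_top v hh), WithTop.coe_inj] at heq

end GoodDecompositions

section ChangeOfVariable

variable {F : Type*} [Field F]

theorem gaussVal_comp_C_mul_X {v : AddValuation F (WithTop ℚ)} {u : F} (hu : v u = 0)
    (p : F[X]) : gaussVal v (p.comp (C u * X)) = gaussVal v p :=
  eq_of_forall_le_iff fun c => by
    simp only [le_gaussVal_iff, comp_C_mul_X_coeff, v.map_mul, v.map_pow, hu, smul_zero, add_zero]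

theorem IsTotallyOdd.C_mul_comp_C_mul_X {p : F[X]} (hp : IsTotallyOdd p) (c u : F) :
    IsTotallyOdd (C c * p.comp (C u * X)) := fun i hi => by
  rw [coeff_C_mul, comp_C_mul_X_coeff, hp i hi, zero_mul, mul_zero]

theorem IsPSD.C_sq_mul_comp_C_mul_X {h q ρ : F[X]} (hd : IsPSD h q ρ) {d u : F} (hdne : d ≠ 0)
    (hu : u ≠ 0) :
    IsPSD (C (d ^ 2) * h.comp (C u * X)) (C d * q.comp (C u * X))
      (C (d ^ 2) * ρ.comp (C u * X)) := by
  have hdeg {c : F} (hc : c ≠ 0) (p : F[X]) :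
      (C c * p.comp (C u * X)).natDegree = p.natDegree := by
    rw [natDegree_C_mul hc, natDegree_comp, natDegree_C_mul_X u hu, mul_one]
  refine ⟨?_, ?_⟩
  · have hcomp := congrArg (·.comp (C u * X)) hd.1
    simp only [add_comp, pow_comp] at hcomp
    rw [hcomp, C_pow]
    ring
  · rw [hdeg hdne, hdeg (pow_ne_zero 2 hdne)]
    exact hd.2

theorem polyTVal_C_mul_comp_C_mul_X_iff [IsAlgClosed F] {v : AddValuation F (WithTop ℚ)}
    {c u : F} (hc : c ≠ 0) (hu : v u = 0) {h : F[X]} {t : ℚ} :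
    PolyTVal v (C c * h.comp (C u * X)) t ↔ PolyTVal v h t := by
  have hval (p : F[X]) : gaussVal v (C c * p.comp (C u * X)) = v c + gaussVal v p := by
    rw [gaussVal_mul, gaussVal_C, gaussVal_comp_C_mul_X hu]
  suffices hgood : ∃ q ρ q' : F[X], IsGoodPSD v h q ρ ∧
      IsGoodPSD v (C c * h.comp (C u * X)) q' (C c * ρ.comp (C u * X)) by
    obtain ⟨q, ρ, q', hd, hd'⟩ := hgood
    rw [hd.polyTVal_iff, hd'.polyTVal_iff, hval, hval, add_assoc, add_assoc, min_add_add_left,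
      WithTop.add_left_inj (v.ne_top_iff.mpr hc)]
  obtain h2 | h2 := (map_two_nonneg v).eq_or_lt'
  · exact ⟨0, h, 0, isGoodPSD_zero_self h2 h, isGoodPSD_zero_self h2 _⟩
  · obtain ⟨q, ρ, hd, hodd⟩ := exists_isPSD_isTotallyOdd h
    obtain ⟨d, rfl⟩ := IsAlgClosed.exists_pow_nat_eq c two_pos
    have hdne : d ≠ 0 := ne_zero_pow two_ne_zero hc
    have hu0 : u ≠ 0 := v.ne_top_iff.mp (hu ▸ WithTop.zero_ne_top)
    exact ⟨q, ρ, C d * q.comp (C u * X),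
      hd.isGoodPSD_of_isOddDominated hodd.isOddDominated h2,
      (hd.C_sq_mul_comp_C_mul_X hdne hu0).isGoodPSD_of_isOddDominated
        (hodd.C_mul_comp_C_mul_X _ u).isOddDominated h2⟩

end ChangeOfVariable

section Products

variable {F : Type*} [Field F] {v : AddValuation F (WithTop ℚ)}

theorem IsPSD.mul {h₁ h₂ q₁ q₂ ρ₁ ρ₂ : F[X]} (hd₁ : IsPSD h₁ q₁ ρ₁) (hd₂ : IsPSD h₂ q₂ ρ₂)
    (hne₁ : h₁ ≠ 0) (hne₂ : h₂ ≠ 0) (heven : Even h₁.natDegree) :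
    IsPSD (h₁ * h₂) (q₁ * q₂) (h₁ * ρ₂ + h₂ * ρ₁ - ρ₁ * ρ₂) := by
  refine ⟨?_, ?_⟩
  · linear_combination (h₂ - ρ₂) * hd₁.1 + q₁ ^ 2 * hd₂.1
  · have hdeg₁ := hd₁.2
    have hdeg₂ := hd₂.2
    have hmul : (q₁ * q₂).natDegree ≤ q₁.natDegree + q₂.natDegree := natDegree_mul_le
    obtain ⟨k, hk⟩ := heven
    rw [natDegree_mul hne₁ hne₂]
    omega

theorem IsPSD.degree_lt_of_isTotallyOdd {h q ρ : F[X]} (hd : IsPSD h q ρ) (hρ : IsTotallyOdd ρ)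
    (hh : h ≠ 0) (heven : Even h.natDegree) : ρ.degree < h.degree := by
  rw [degree_eq_natDegree hh, degree_lt_iff_coeff_zero]
  intro n hn
  obtain rfl | hn := hn.eq_or_lt
  · exact hρ _ heven
  · have hq : (q ^ 2).natDegree < n := by
      have hdeg := hd.2
      obtain ⟨k, hk⟩ := heven
      rw [natDegree_pow]
      omega
    rw [← sub_eq_of_eq_add' hd.1, coeff_sub, coeff_eq_zero_of_natDegree_lt hn,
      coeff_eq_zero_of_natDegree_lt hq, sub_zero]

theorem lt_map_coeff_sq_mul_of_even (h2 : 0 < v 2) {q ρ : F[X]} (hq : 0 ≤ gaussVal v (q ^ 2))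
    (hρ : IsTotallyOdd ρ) {r : WithTop ℚ} (hr : r < ⊤) (hrρ : r ≤ gaussVal v ρ) {i : ℕ}
    (hi : Even i) : r < v ((q ^ 2 * ρ).coeff i) := by
  rw [coeff_mul]
  refine v.map_lt_sum hr.ne fun x hx => ?_
  rw [Finset.HasAntidiagonal.mem_antidiagonal] at hx
  obtain heven | hodd := x.2.even_or_odd
  · rwa [hρ _ heven, mul_zero, v.map_zero]
  · have hodd' : Odd x.1 := by
      by_contra hcon
      exact Nat.not_even_iff_odd.mpr ((Nat.not_odd_iff_even.mp hcon).add_odd hodd) (hx ▸ hi)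
    rw [v.map_mul]
    refine lt_add_of_ne_top_of_pos_of_le hr.ne ?_ (hrρ.trans (gaussVal_le_map_coeff v ρ _))
    exact (add_pos_of_pos_of_nonneg h2 hq).trans_le
      (add_gaussVal_le_map_coeff_sq_of_odd v q hodd')

theorem IsPSD.gaussVal_sq_nonneg {h q ρ : F[X]} (hd : IsPSD h q ρ) (hh : 0 ≤ gaussVal v h)
    (hρ : 0 ≤ gaussVal v ρ) : 0 ≤ gaussVal v (q ^ 2) := by
  rw [← sub_eq_of_eq_add hd.1]
  exact (gaussValuation v).map_le_sub hh hρ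

theorem IsPSD.gaussVal_nonneg_of_isOddDominated {h q ρ : F[X]} (hd : IsPSD h q ρ)
    (hρ : IsOddDominated v ρ) (h2 : 0 < v 2) (hh : 0 ≤ gaussVal v h) : 0 ≤ gaussVal v ρ :=
  hh.trans (hd.1 ▸ hρ.gaussVal_sq_add_le h2 q)

theorem IsPSD.gaussVal_pos_of_isTotallyOdd {h q ρ : F[X]} (hd : IsPSD h q ρ)
    (hρ : IsTotallyOdd ρ) (h2 : 0 < v 2) (hh : 0 ≤ gaussVal v h)
    (hodd : ∀ i, Odd i → 0 < v (h.coeff i)) : 0 < gaussVal v ρ := by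
  have hq := hd.gaussVal_sq_nonneg hh
    (hd.gaussVal_nonneg_of_isOddDominated hρ.isOddDominated h2 hh)
  refine lt_gaussVal_of_forall v (WithTop.coe_lt_top 0) fun i => ?_
  obtain hi | hi := i.even_or_odd
  · rw [hρ i hi, v.map_zero]
    exact WithTop.coe_lt_top 0
  · rw [← sub_eq_of_eq_add' hd.1, coeff_sub]
    have hqi : 0 < v ((q ^ 2).coeff i) := (add_pos_of_pos_of_nonneg h2 hq).trans_le
      (add_gaussVal_le_map_coeff_sq_of_odd v q hi)
    exact (lt_min (hodd i hi) hqi).trans_le (v.map_sub _ _)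

theorem min_gaussVal_le_mul_add_mul_sub_mul {p q b c : F[X]} (hp : 0 ≤ gaussVal v p)
    (hq : 0 ≤ gaussVal v q) (hb : 0 ≤ gaussVal v b) :
    min (gaussVal v b) (gaussVal v c) ≤ gaussVal v (p * b + q * c - c * b) := by
  refine (gaussValuation v).map_le_sub ((gaussValuation v).map_le_add ?_ ?_) ?_
  · exact (min_le_left _ _).trans ((le_add_of_nonneg_left hp).trans_eq (gaussVal_mul v p b).symm)
  · exact (min_le_right _ _).trans ((le_add_of_nonneg_left hq).trans_eq (gaussVal_mul v q c).symm)
  · exact (min_le_right _ _).trans ((le_add_of_nonneg_right hb).trans_eq (gaussVal_mul v c b).symm)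

theorem IsResiduallyCoprime.gaussVal_mul_add_mul_sub_mul {p q b c : F[X]}
    (hpq : IsResiduallyCoprime v p q) (hp : p.Monic) (hp0 : 0 ≤ gaussVal v p)
    (hq0 : 0 ≤ gaussVal v q) (hdeg : c.degree < p.degree)
    (hlt : min (gaussVal v b) (gaussVal v c) < gaussVal v (c * b)) :
    gaussVal v (p * b + q * c - c * b) = min (gaussVal v b) (gaussVal v c) := by
  have hsum := hpq.gaussVal_mul_add_mul hp hp0 hq0 hdeg (b := b)
  rw [← hsum] at hlt ⊢
  exact (gaussValuation v).map_sub_eq_of_lt_left hlt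

theorem isGoodPSD_mul_of_isTotallyOdd {h₁ h₂ q₁ q₂ ρ₁ ρ₂ : F[X]} (h2 : 0 < v 2)
    (hmonic : h₁.Monic) (heven : Even h₁.natDegree) (hint₁ : 0 ≤ gaussVal v h₁)
    (hval₂ : gaussVal v h₂ = 0) (hcop : IsResiduallyCoprime v h₁ h₂)
    (hodd : (∀ i, Odd i → 0 < v (h₁.coeff i)) ∨ ∀ i, Odd i → 0 < v (h₂.coeff i))
    (hd₁ : IsPSD h₁ q₁ ρ₁) (hρ₁ : IsTotallyOdd ρ₁) (hd₂ : IsPSD h₂ q₂ ρ₂)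
    (hρ₂ : IsTotallyOdd ρ₂) :
    IsGoodPSD v (h₁ * h₂) (q₁ * q₂) (h₁ * ρ₂ + h₂ * ρ₁ - ρ₁ * ρ₂) ∧
      min (v 2 + v 2) (gaussVal v (h₁ * ρ₂ + h₂ * ρ₁ - ρ₁ * ρ₂)) =
        min (v 2 + v 2) (min (gaussVal v ρ₂) (gaussVal v ρ₁)) := by
  set ρ := h₁ * ρ₂ + h₂ * ρ₁ - ρ₁ * ρ₂ with hρ
  set r := min (gaussVal v ρ₂) (gaussVal v ρ₁)
  have hd : IsPSD (h₁ * h₂) (q₁ * q₂) ρ := hd₁.mul hd₂ hmonic.ne_zero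
    (fun h0 => by rw [h0, gaussVal_zero] at hval₂; exact WithTop.top_ne_zero hval₂) heven
  have hn₁ := hd₁.gaussVal_nonneg_of_isOddDominated hρ₁.isOddDominated h2 hint₁
  have hn₂ := hd₂.gaussVal_nonneg_of_isOddDominated hρ₂.isOddDominated h2 hval₂.ge
  obtain hr | hr := le_or_gt (v 2 + v 2) r
  · have hle : v 2 + v 2 ≤ gaussVal v ρ :=
      hr.trans (min_gaussVal_le_mul_add_mul_sub_mul hint₁ hval₂.ge hn₂)
    refine ⟨⟨hd, Or.inl ?_⟩, by rw [min_eq_left hle, min_eq_left hr]⟩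
    rwa [gaussVal_mul, gaussVal_eq_zero_of_monic v hmonic hint₁, hval₂, zero_add, zero_add]
  have hrtop : r < ⊤ := hr.trans_le le_top
  have hcross : r < gaussVal v (ρ₁ * ρ₂) := by
    rw [gaussVal_mul]
    obtain hodd | hodd := hodd
    · exact lt_add_of_ne_top_of_pos_of_le hrtop.ne
        (hd₁.gaussVal_pos_of_isTotallyOdd hρ₁ h2 hint₁ hodd) (min_le_left _ _)
    · rw [add_comm]
      exact lt_add_of_ne_top_of_pos_of_le hrtop.ne
        (hd₂.gaussVal_pos_of_isTotallyOdd hρ₂ h2 hval₂.ge hodd) (min_le_right _ _)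
  have hvρ : gaussVal v ρ = r := hcop.gaussVal_mul_add_mul_sub_mul hmonic hint₁ hval₂.ge
    (hd₁.degree_lt_of_isTotallyOdd hρ₁ hmonic.ne_zero heven) hcross
  refine ⟨hd.isGoodPSD_of_isOddDominated (isOddDominated_of_forall_even fun i hi => ?_) h2,
    by rw [hvρ]⟩
  have hexp : ρ = q₁ ^ 2 * ρ₂ + (q₂ ^ 2 * ρ₁ + ρ₁ * ρ₂) := by
    linear_combination hρ + ρ₂ * hd₁.1 + ρ₁ * hd₂.1
  rw [hvρ, hexp, coeff_add, coeff_add]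
  refine v.map_lt_add ?_ (v.map_lt_add ?_ (hcross.trans_le (gaussVal_le_map_coeff v _ i)))
  · exact lt_map_coeff_sq_mul_of_even h2 (hd₁.gaussVal_sq_nonneg hint₁ hn₁) hρ₂ hrtop
      (min_le_left _ _) hi
  · exact lt_map_coeff_sq_mul_of_even h2 (hd₂.gaussVal_sq_nonneg hval₂.ge hn₂) hρ₁ hrtop
      (min_le_right _ _) hi

theorem PolyTVal.mul [IsAlgClosed F] {h₁ h₂ : F[X]}
    (hmonic : h₁.Monic) (heven : Even h₁.natDegree) (hint₁ : 0 ≤ gaussVal v h₁)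
    (hval₂ : gaussVal v h₂ = 0) (hcop : IsResiduallyCoprime v h₁ h₂)
    (hodd : (∀ i, Odd i → 0 < v (h₁.coeff i)) ∨ ∀ i, Odd i → 0 < v (h₂.coeff i))
    {t₁ t₂ : ℚ} (ht₁ : PolyTVal v h₁ t₁) (ht₂ : PolyTVal v h₂ t₂) :
    PolyTVal v (h₁ * h₂) (min t₁ t₂) := by
  have hval₁ := gaussVal_eq_zero_of_monic v hmonic hint₁
  have hval : gaussVal v (h₁ * h₂) = 0 := by rw [gaussVal_mul, hval₁, hval₂, add_zero]
  have iff_min_eq {h q ρ : F[X]} {t : ℚ} (hh : gaussVal v h = 0) (hgood : IsGoodPSD v h q ρ) :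
      PolyTVal v h t ↔ (t : WithTop ℚ) = min (v 2 + v 2) (gaussVal v ρ) := by
    rw [hgood.polyTVal_iff, hh, zero_add, zero_add]
  obtain h2 | h2 := (map_two_nonneg v).eq_or_lt'
  · have hgood := isGoodPSD_zero_self h2
    rw [iff_min_eq hval₁ (hgood h₁), hval₁] at ht₁
    rw [iff_min_eq hval₂ (hgood h₂), hval₂] at ht₂
    rw [iff_min_eq hval (hgood _), hval, WithTop.coe_min, ht₁, ht₂, min_self]
  · obtain ⟨q₁, ρ₁, hd₁, hρ₁⟩ := exists_isPSD_isTotallyOdd h₁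
    obtain ⟨q₂, ρ₂, hd₂, hρ₂⟩ := exists_isPSD_isTotallyOdd h₂
    obtain ⟨hgood, hmin⟩ := isGoodPSD_mul_of_isTotallyOdd h2 hmonic heven hint₁ hval₂ hcop hodd
      hd₁ hρ₁ hd₂ hρ₂
    rw [iff_min_eq hval₁ (hd₁.isGoodPSD_of_isOddDominated hρ₁.isOddDominated h2)] at ht₁
    rw [iff_min_eq hval₂ (hd₂.isGoodPSD_of_isOddDominated hρ₂.isOddDominated h2)] at ht₂
    rw [iff_min_eq hval hgood, hmin, WithTop.coe_min, ht₁, ht₂, min_min_min_comm, min_self,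
      min_comm (gaussVal v ρ₂)]

end Products

section RootPolynomials

variable {F : Type*} [Field F] {v : AddValuation F (WithTop ℚ)}

theorem rootsPoly_add (S T : Multiset F) : rootsPoly (S + T) = rootsPoly S * rootsPoly T := by
  rw [rootsPoly, Multiset.map_add, Multiset.prod_add, rootsPoly, rootsPoly]

theorem rootsPoly_monic (S : Multiset F) : (rootsPoly S).Monic :=
  monic_multiset_prod_of_monic S _ fun a _ => monic_X_sub_C a

theorem natDegree_rootsPoly (S : Multiset F) : (rootsPoly S).natDegree = Multiset.card S :=
  natDegree_multiset_prod_X_sub_C_eq_card S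

/-- The polynomial `∏_{e ∈ S} (1 - e z)`. It replaces `rootsPoly` for factors whose roots have
negative valuation: these are normalised by their constant coefficient, not the leading one. -/
noncomputable def reciprocalRootsPoly (S : Multiset F) : F[X] :=
  (S.map fun e => 1 - C e * X).prod

theorem coeff_zero_reciprocalRootsPoly (S : Multiset F) :
    (reciprocalRootsPoly S).coeff 0 = 1 := by
  simp [reciprocalRootsPoly, coeff_zero_multiset_prod]

theorem rootsPoly_comp (S : Multiset F) (α β : F) :
    (rootsPoly S).comp (C β * X + C α) = (S.map fun a => C β * X - C (a - α)).prod := by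
  rw [rootsPoly, multiset_prod_comp, Multiset.map_map]
  congr 1
  refine Multiset.map_congr rfl fun a _ => ?_
  simp only [Function.comp_apply, sub_comp, X_comp, C_comp, C_sub]
  ring

theorem rootsPoly_comp_eq_C_mul_rootsPoly (S : Multiset F) (α : F) {β : F} (hβ : β ≠ 0) :
    (rootsPoly S).comp (C β * X + C α) =
      C (β ^ Multiset.card S) * rootsPoly (S.map fun a => (a - α) / β) := by
  rw [rootsPoly_comp, rootsPoly, Multiset.map_map, C_pow,
    ← Multiset.prod_replicate, ← Multiset.map_const', ← Multiset.prod_map_mul]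
  congr 1
  refine Multiset.map_congr rfl fun a _ => ?_
  rw [Function.comp_apply, mul_sub, ← C_mul, mul_div_cancel₀ _ hβ]

theorem rootsPoly_comp_eq_C_mul_reciprocalRootsPoly {S : Multiset F} {α : F}
    (hS : ∀ a ∈ S, a - α ≠ 0) (β : F) :
    (rootsPoly S).comp (C β * X + C α) =
      C (S.map fun a => α - a).prod * reciprocalRootsPoly (S.map fun a => β / (a - α)) := by
  rw [rootsPoly_comp, reciprocalRootsPoly, Multiset.map_map, map_multiset_prod, Multiset.map_map,
    ← Multiset.prod_map_mul]
  congr 1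
  refine Multiset.map_congr rfl fun a ha => ?_
  have hcancel : (α - a) * (β / (a - α)) = -β := by
    rw [← neg_sub a α, neg_mul, mul_div_cancel₀ _ (hS a ha)]
  simp only [Function.comp_apply]
  rw [mul_sub, mul_one, ← mul_assoc, ← C_mul, hcancel, ← neg_sub a α, C_neg, C_neg]
  ring

theorem gaussVal_multiset_prod_nonneg {S : Multiset F[X]} (hS : ∀ p ∈ S, 0 ≤ gaussVal v p) :
    0 ≤ gaussVal v S.prod :=
  Multiset.prod_induction (fun p => 0 ≤ gaussVal v p) S
    (fun p q hp hq => (add_nonneg hp hq).trans_eq (gaussVal_mul v p q).symm)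
    (gaussValuation v).map_one.ge hS

theorem gaussVal_multiset_prod_map_sub_pos {ι : Type*} {S : Multiset ι} {f g : ι → F[X]}
    (hf : ∀ a ∈ S, 0 ≤ gaussVal v (f a)) (hg : ∀ a ∈ S, 0 ≤ gaussVal v (g a))
    (hfg : ∀ a ∈ S, 0 < gaussVal v (f a - g a)) :
    0 < gaussVal v ((S.map f).prod - (S.map g).prod) := by
  induction S using Multiset.induction_on with
  | empty =>
    rw [Multiset.map_zero, Multiset.map_zero, sub_self, gaussVal_zero]
    exact WithTop.coe_lt_top 0
  | cons a S ih =>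
    simp only [Multiset.forall_mem_cons] at hf hg hfg
    have hprod : 0 ≤ gaussVal v (S.map g).prod :=
      gaussVal_multiset_prod_nonneg (by simpa only [Multiset.forall_mem_map_iff] using hg.2)
    have hfst : 0 < gaussVal v (f a * ((S.map f).prod - (S.map g).prod)) := by
      rw [gaussVal_mul]
      exact (ih hf.2 hg.2 hfg.2).trans_le (le_add_of_nonneg_left hf.1)
    have hsnd : 0 < gaussVal v ((f a - g a) * (S.map g).prod) := by
      rw [gaussVal_mul]
      exact hfg.1.trans_le (le_add_of_nonneg_right hprod)
    rw [Multiset.map_cons, Multiset.map_cons, Multiset.prod_cons, Multiset.prod_cons,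
      show ∀ p q r s : F[X], p * q - r * s = p * (q - s) + (p - r) * s by intros; ring]
    exact (gaussValuation v).map_lt_add hfst hsnd

theorem gaussVal_X_sub_C_nonneg {e : F} (he : 0 ≤ v e) : 0 ≤ gaussVal v (X - C e) :=
  (gaussValuation v).map_le_sub (gaussVal_X v).ge (he.trans_eq (gaussVal_C v e).symm)

theorem gaussVal_C_mul_X (e : F) : gaussVal v (C e * X) = v e := by
  rw [gaussVal_mul, gaussVal_C, gaussVal_X, add_zero]

theorem gaussVal_one_sub_C_mul_X_nonneg {e : F} (he : 0 ≤ v e) :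
    0 ≤ gaussVal v (1 - C e * X) :=
  (gaussValuation v).map_le_sub (gaussValuation v).map_one.ge
    (he.trans_eq (gaussVal_C_mul_X e).symm)

theorem gaussVal_rootsPoly_nonneg {S : Multiset F} (hS : ∀ e ∈ S, 0 ≤ v e) :
    0 ≤ gaussVal v (rootsPoly S) :=
  gaussVal_multiset_prod_nonneg <| Multiset.forall_mem_map_iff.mpr fun e he =>
    gaussVal_X_sub_C_nonneg (hS e he)

theorem gaussVal_reciprocalRootsPoly {S : Multiset F} (hS : ∀ e ∈ S, 0 ≤ v e) :
    gaussVal v (reciprocalRootsPoly S) = 0 := by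
  refine gaussVal_eq_zero_of_coeff_eq_one v ?_ (coeff_zero_reciprocalRootsPoly S)
  exact gaussVal_multiset_prod_nonneg <| Multiset.forall_mem_map_iff.mpr fun e he =>
    gaussVal_one_sub_C_mul_X_nonneg (hS e he)

theorem gaussVal_rootsPoly_sub_X_pow_pos {S : Multiset F} (hS : ∀ e ∈ S, 0 < v e) :
    0 < gaussVal v (rootsPoly S - X ^ Multiset.card S) := by
  rw [← Multiset.prod_replicate, ← Multiset.map_const', rootsPoly]
  refine gaussVal_multiset_prod_map_sub_pos (fun e he => gaussVal_X_sub_C_nonneg (hS e he).le)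
    (fun _ _ => (gaussVal_X v).ge) fun e he => ?_
  have hswap : gaussVal v (X - C e - X) = gaussVal v (X - (X - C e)) :=
    (gaussValuation v).map_sub_swap _ _
  rw [hswap, sub_sub_cancel, gaussVal_C]
  exact hS e he

theorem gaussVal_reciprocalRootsPoly_sub_one_pos {S : Multiset F} (hS : ∀ e ∈ S, 0 < v e) :
    0 < gaussVal v (reciprocalRootsPoly S - 1) := by
  rw [← one_pow (M := F[X]) (Multiset.card S), ← Multiset.prod_replicate, ← Multiset.map_const',
    reciprocalRootsPoly]
  refine gaussVal_multiset_prod_map_sub_pos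
    (fun e he => gaussVal_one_sub_C_mul_X_nonneg (hS e he).le)
    (fun _ _ => (gaussValuation v).map_one.ge) fun e he => ?_
  have hswap : gaussVal v (1 - C e * X - 1) = gaussVal v (1 - (1 - C e * X)) :=
    (gaussValuation v).map_sub_swap _ _
  rw [hswap, sub_sub_cancel, gaussVal_C_mul_X]
  exact hS e he

theorem map_coeff_pos_of_sub_X_pow_pos {p : F[X]} {n i : ℕ} (hp : 0 < gaussVal v (p - X ^ n))
    (hi : i ≠ n) : 0 < v (p.coeff i) := by
  simpa only [coeff_sub, coeff_X_pow, if_neg hi, sub_zero] using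
    hp.trans_le (gaussVal_le_map_coeff v _ i)

theorem map_div_nonneg_iff {x y : F} (hy : y ≠ 0) : 0 ≤ v (x / y) ↔ v y ≤ v x := by
  have hmul : v x = v (x / y) + v y := by rw [← v.map_mul, div_mul_cancel₀ x hy]
  rw [hmul]
  simpa only [zero_add] using
    (WithTop.add_le_add_iff_right (x := 0) (v.ne_top_iff.mpr hy)).symm

theorem map_div_pos_iff {x y : F} (hy : y ≠ 0) : 0 < v (x / y) ↔ v y < v x := by
  have hmul : v x = v (x / y) + v y := by rw [← v.map_mul, div_mul_cancel₀ x hy]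
  rw [hmul]
  simpa only [zero_add] using
    (WithTop.add_lt_add_iff_right (x := 0) (v.ne_top_iff.mpr hy)).symm

theorem PolyTVal.rootsPoly_mul_reciprocalRootsPoly [IsAlgClosed F] {S T : Multiset F}
    (heven : Even (Multiset.card S)) (hS : ∀ e ∈ S, 0 ≤ v e) (hT : ∀ e ∈ T, 0 ≤ v e)
    (hpos : (∀ e ∈ S, 0 < v e) ∨ ∀ e ∈ T, 0 < v e) {t₁ t₂ : ℚ}
    (ht₁ : PolyTVal v (rootsPoly S) t₁) (ht₂ : PolyTVal v (reciprocalRootsPoly T) t₂) :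
    PolyTVal v (rootsPoly S * reciprocalRootsPoly T) (min t₁ t₂) := by
  have hrecip := gaussVal_reciprocalRootsPoly hT
  refine PolyTVal.mul (rootsPoly_monic S) (by rwa [natDegree_rootsPoly])
    (gaussVal_rootsPoly_nonneg hS) hrecip ?_ ?_ ht₁ ht₂
  · obtain hS | hT := hpos
    · exact isResiduallyCoprime_of_sub_X_pow_pos (gaussVal_rootsPoly_sub_X_pow_pos hS) hrecip.ge
        (coeff_zero_reciprocalRootsPoly T)
    · exact isResiduallyCoprime_of_sub_one_pos (gaussVal_reciprocalRootsPoly_sub_one_pos hT)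
  · refine hpos.imp (fun hS i hi => ?_) fun hT i hi => ?_
    · refine map_coeff_pos_of_sub_X_pow_pos (gaussVal_rootsPoly_sub_X_pow_pos hS) ?_
      rintro rfl
      exact Nat.not_even_iff_odd.mpr hi heven
    · refine map_coeff_pos_of_sub_X_pow_pos (n := 0) ?_ hi.pos.ne'
      rw [pow_zero]
      exact gaussVal_reciprocalRootsPoly_sub_one_pos hT

end RootPolynomials

section TVal

variable {F : Type*} [Field F] [IsAlgClosed F] {v : AddValuation F (WithTop ℚ)}
  {S : Multiset F} {α : F} {b : ℚ}

theorem tVal_iff_polyTVal {β c : F} {h : F[X]} (hβ : β ≠ 0) (hvβ : v β = b) (hc : c ≠ 0)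
    (hcomp : (rootsPoly S).comp (C β * X + C α) = C c * h) {t : ℚ} :
    TVal v S α b t ↔ PolyTVal v h t := by
  have key {β' : F} (hvβ' : v β' = b) :
      PolyTVal v ((rootsPoly S).comp (C β' * X + C α)) t ↔ PolyTVal v h t := by
    have hu : v (β' / β) = 0 := by
      have hmul : v (β' / β) + v β = 0 + v β := by
        rw [← v.map_mul, div_mul_cancel₀ _ hβ, zero_add, hvβ', hvβ]
      exact (WithTop.add_right_inj (v.ne_top_iff.mpr hβ)).mp hmul
    have hlin : C β' * X + C α = (C β * X + C α).comp (C (β' / β) * X) := by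
      simp only [add_comp, mul_comp, C_comp, X_comp]
      rw [← mul_assoc, ← C_mul, mul_div_cancel₀ _ hβ]
    rw [hlin, ← comp_assoc, hcomp, mul_comp, C_comp, polyTVal_C_mul_comp_C_mul_X_iff hc hu]
  exact ⟨fun ⟨_, _, hvβ', hlub⟩ => (key hvβ').mp hlub, fun ht => ⟨β, hβ, hvβ, (key hvβ).mpr ht⟩⟩

theorem TVal.unique {t t' : ℚ} (ht : TVal v S α b t) (ht' : TVal v S α b t') : t = t' := by
  obtain ⟨β, hβ, hvβ, -⟩ := id ht
  have hcomp := rootsPoly_comp_eq_C_mul_rootsPoly S α hβ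
  have hc := pow_ne_zero (Multiset.card S) hβ
  rw [tVal_iff_polyTVal hβ hvβ hc hcomp] at ht ht'
  exact ht.unique (rootsPoly_monic _).ne_zero ht'

end TVal

theorem stmt11_general {F : Type*} [Field F] [IsAlgClosed F] {v : AddValuation F (WithTop ℚ)}
    {S T : Multiset F} (heven : Even (Multiset.card S)) {α : F}
    (hlt : ∀ a ∈ T, v (a - α) < (S.map fun a => v (a - α)).inf) {b : ℚ}
    (hb₁ : ∀ a ∈ T, v (a - α) ≤ (b : WithTop ℚ))
    (hb₂ : (b : WithTop ℚ) ≤ (S.map fun a => v (a - α)).inf) {t₁ t₂ : ℚ}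
    (ht₁ : TVal v S α b t₁) (ht₂ : TVal v T α b t₂) : TVal v (S + T) α b (min t₁ t₂) := by
  obtain ⟨β, hβ, hvβ, -⟩ := id ht₁
  have hT : ∀ a ∈ T, a - α ≠ 0 := fun a ha =>
    v.ne_top_iff.mp ((hb₁ a ha).trans_lt (WithTop.coe_lt_top b)).ne
  have hS : ∀ a ∈ S, (S.map fun a => v (a - α)).inf ≤ v (a - α) := fun a ha =>
    Multiset.inf_le (Multiset.mem_map_of_mem _ ha)
  have hc₁ : β ^ Multiset.card S ≠ 0 := pow_ne_zero _ hβ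
  have hc₂ : (T.map fun a => α - a).prod ≠ 0 := Multiset.prod_ne_zero fun h0 => by
    obtain ⟨a, ha, haα⟩ := Multiset.mem_map.mp h0
    exact hT a ha (by rw [← neg_sub, haα, neg_zero])
  have hcomp₁ := rootsPoly_comp_eq_C_mul_rootsPoly S α hβ
  have hcomp₂ := rootsPoly_comp_eq_C_mul_reciprocalRootsPoly hT β
  rw [tVal_iff_polyTVal hβ hvβ hc₁ hcomp₁] at ht₁
  rw [tVal_iff_polyTVal hβ hvβ hc₂ hcomp₂] at ht₂
  rw [tVal_iff_polyTVal hβ hvβ (mul_ne_zero hc₁ hc₂)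
    (by rw [rootsPoly_add, mul_comp, hcomp₁, hcomp₂, C_mul, mul_mul_mul_comm])]
  refine ht₁.rootsPoly_mul_reciprocalRootsPoly (by rwa [Multiset.card_map]) ?_ ?_ ?_ ht₂ <;>
    simp only [Multiset.forall_mem_map_iff]
  · exact fun a ha => (map_div_nonneg_iff hβ).mpr (hvβ ▸ hb₂.trans (hS a ha))
  · exact fun a ha => (map_div_nonneg_iff (hT a ha)).mpr (hvβ ▸ hb₁ a ha)
  · refine hb₂.lt_or_eq.imp (fun hb a ha => ?_) fun hb a ha => ?_
    · exact (map_div_pos_iff hβ).mpr (hvβ ▸ hb.trans_le (hS a ha))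
    · exact (map_div_pos_iff (hT a ha)).mpr (hvβ ▸ hb ▸ hlt a ha)

/-- Let `f` be nonzero with multiset of roots `R`, let `𝔰 ≤ R` be a
sub-multiset of even cardinality, and assume `d₋(𝔰,α) < d₊(𝔰,α)` (i.e. every root
outside `𝔰` is strictly closer to `α` than `d₊(𝔰,α) = inf_{a ∈ 𝔰} v (a − α)`).
Then for every rational `b` with `d₋(𝔰,α) ≤ b ≤ d₊(𝔰,α)` one has
`𝔱^R(α,b) = min (𝔱^𝔰(α,b), 𝔱^{R∖𝔰}(α,b))`. -/
theorem stmt11 {Kbar : Type*} [Field Kbar] [DecidableEq Kbar] [IsAlgClosed Kbar]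
    (v : AddValuation Kbar (WithTop ℚ)) (hchar : (2 : Kbar) ≠ 0)
    (hres : ResidueAlgClosed v)
    (hsurj : ∀ b : ℚ, ∃ β : Kbar, β ≠ 0 ∧ v β = (b : WithTop ℚ))
    (f : Kbar[X]) (hf : f ≠ 0) (𝔰 : Multiset Kbar) (h𝔰 : 𝔰 ≤ f.roots)
    (heven : Even (Multiset.card 𝔰)) (α : Kbar)
    (hlt : ∀ a' ∈ f.roots - 𝔰, v (a' - α) < (𝔰.map fun a => v (a - α)).inf)
    (b : ℚ)
    (hb₁ : ∀ a' ∈ f.roots - 𝔰, v (a' - α) ≤ (b : WithTop ℚ))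
    (hb₂ : (b : WithTop ℚ) ≤ (𝔰.map fun a => v (a - α)).inf) :
    ∀ t t₁ t₂ : ℚ, TVal v f.roots α b t → TVal v 𝔰 α b t₁ →
      TVal v (f.roots - 𝔰) α b t₂ → t = min t₁ t₂ :=
  fun _ _ _ ht ht₁ ht₂ =>
    ht.unique (add_tsub_cancel_of_le h𝔰 ▸ stmt11_general heven hlt hb₁ hb₂ ht₁ ht₂)
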